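/- arXiv:2309.08883 — 3 statements merged into one kernel-verified Lean document; each statement's English description precedes it below -/
import Mathlib

section
/- Let n and l be natural numbers with l ≥ 1, and let w : {0,1}^n → ℝ be a function taking strictly positive values. Let M = max_{x ∈ {0,1}^n} w(x), and define the set S(w,l) ⊆ {0,1}^n × {0,1}^l to consist of all pairs (x, y) such that for every i with 1 ≤ i ≤ l, if w(x)/M ≤ 2^(i-1)/2^l then the i-th coordinate y_i of y equals 0. Then (∑_{x ∈ {0,1}^n} w(x)) ≤ (M/2^l) · |S(w,l)| ≤ 2·(∑_{x ∈ {0,1}^n} w(x)) + M·2^(n-l). -/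
/-!
For fixed `x` put `t = (w x / M) * 2 ^ l`, so that `0 < t ≤ 2 ^ l`. The bit `y i` is free exactly
when `2 ^ i < t`, hence the fiber of `S(w,l)` over `x` has `2 ^ k` elements, where `k` is the
number of `i < l` with `2 ^ i < t`. These `i` form an initial segment, so either `t ≤ 1` and
`2 ^ k = 1`, or `t ≤ 2 ^ k < 2 * t`; in both cases `t ≤ 2 ^ k ≤ 2 * t + 1`
(`prod_fiber_bounds`, `fiber_card_bounds`). Multiplying by `M / 2 ^ l` and summing over the
`2 ^ n` strings `x` gives both bounds.
-/

/-- The number of free choices, as a product over coordinates. The clause for `2 ^ l < t` (all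
coordinates free) is what carries the induction on `l`. -/
lemma prod_fiber_bounds (t : ℝ) (ht : 0 < t) (l : ℕ) :
    (t ≤ 2 ^ l → t ≤ ∏ i : Fin l, (if t ≤ 2 ^ (i : ℕ) then (1 : ℝ) else 2) ∧
      ∏ i : Fin l, (if t ≤ 2 ^ (i : ℕ) then (1 : ℝ) else 2) ≤ 2 * t + 1) ∧
    (2 ^ l < t → ∏ i : Fin l, (if t ≤ 2 ^ (i : ℕ) then (1 : ℝ) else 2) = 2 ^ l) := by
  induction l with
  | zero =>
    refine ⟨fun h => ?_, fun _ => by simp⟩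
    simp only [pow_zero] at h
    simp only [Finset.univ_eq_empty, Finset.prod_empty]
    exact ⟨h, by linarith⟩
  | succ l ih =>
    have hpos : (0 : ℝ) < 2 ^ l := by positivity
    rw [Fin.prod_univ_castSucc]
    simp only [Fin.val_castSucc, Fin.val_last]
    by_cases h : t ≤ 2 ^ l
    · rw [if_pos h, mul_one]
      refine ⟨fun _ => ih.1 h, fun h' => ?_⟩
      rw [pow_succ] at h'
      linarith
    · rw [if_neg h, ih.2 (not_le.mp h), pow_succ]
      exact ⟨fun h' => ⟨h', by linarith⟩, fun _ => rfl⟩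

lemma fiber_card (l : ℕ) (t : ℝ) :
    (Nat.card {y : Fin l → Bool // ∀ i : Fin l, t ≤ 2 ^ (i : ℕ) → y i = false} : ℝ) =
      ∏ i : Fin l, (if t ≤ 2 ^ (i : ℕ) then (1 : ℝ) else 2) := by
  rw [Nat.card_congr (Equiv.subtypePiEquivPi
    (p := fun (i : Fin l) (b : Bool) => t ≤ 2 ^ (i : ℕ) → b = false)), Nat.card_pi, Nat.cast_prod]
  refine Finset.prod_congr rfl fun i _ => ?_
  by_cases h : t ≤ 2 ^ (i : ℕ) <;> simp [h]

lemma fiber_card_bounds (l : ℕ) (t : ℝ) (ht : 0 < t) (htl : t ≤ 2 ^ l) :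
    t ≤ (Nat.card {y : Fin l → Bool // ∀ i : Fin l, t ≤ 2 ^ (i : ℕ) → y i = false} : ℝ) ∧
    (Nat.card {y : Fin l → Bool // ∀ i : Fin l, t ≤ 2 ^ (i : ℕ) → y i = false} : ℝ)
      ≤ 2 * t + 1 := by
  rw [fiber_card]
  exact (prod_fiber_bounds t ht l).1 htl

/-- Discretization lemma (Xue et al. 2016): both bounds.
`M` is the maximum of the strictly positive weight function `w` on `{0,1}^n`,
and `S(w,l)` is the set of pairs `(x,y)` such that for every `i ∈ {1,…,l}`,
if `w(x)/M ≤ 2^(i-1)/2^l` then `y_i = 0` (here `i : Fin l` plays the role of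
`i-1 ∈ {0,…,l-1}` and `false` plays the role of `0`). Then
`∑ x, w x ≤ (M/2^l) * |S(w,l)| ≤ 2 * ∑ x, w x + M * 2^(n-l)`. -/
theorem discretization_lemma (n l : ℕ) (hl : 1 ≤ l)
    (w : (Fin n → Bool) → ℝ) (hw : ∀ x, 0 < w x)
    (M : ℝ) (hM : IsGreatest (Set.range w) M) :
    (∑ x : Fin n → Bool, w x) ≤
        (M / 2 ^ l) *
          (Nat.card {p : (Fin n → Bool) × (Fin l → Bool) //
            ∀ i : Fin l, w p.1 / M ≤ 2 ^ (i : ℕ) / 2 ^ l → p.2 i = false} : ℝ) ∧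
      (M / 2 ^ l) *
          (Nat.card {p : (Fin n → Bool) × (Fin l → Bool) //
            ∀ i : Fin l, w p.1 / M ≤ 2 ^ (i : ℕ) / 2 ^ l → p.2 i = false} : ℝ) ≤
        2 * (∑ x : Fin n → Bool, w x) + M * (2 : ℝ) ^ ((n : ℤ) - (l : ℤ)) := by
  obtain ⟨x₀, hx₀⟩ := hM.1
  have hMpos : 0 < M := hx₀ ▸ hw x₀
  have hle : ∀ x, w x ≤ M := fun x => hM.2 ⟨x, rfl⟩
  have hP : (0 : ℝ) < 2 ^ l := by positivity
  have hcard : (Nat.card {p : (Fin n → Bool) × (Fin l → Bool) //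
      ∀ i : Fin l, w p.1 / M ≤ 2 ^ (i : ℕ) / 2 ^ l → p.2 i = false} : ℝ) =
      ∑ x : Fin n → Bool, (Nat.card {y : Fin l → Bool //
        ∀ i : Fin l, w x / M * 2 ^ l ≤ 2 ^ (i : ℕ) → y i = false} : ℝ) := by
    simp only [le_div_iff₀ hP]
    rw [Nat.card_congr (Equiv.subtypeProdEquivSigmaSubtype
      (fun (x : Fin n → Bool) (y : Fin l → Bool) =>
        ∀ i : Fin l, w x / M * 2 ^ l ≤ 2 ^ (i : ℕ) → y i = false)), Nat.card_sigma, Nat.cast_sum]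
  have hb : ∀ x, _ := fun x => fiber_card_bounds l (w x / M * 2 ^ l)
    (mul_pos (div_pos (hw x) hMpos) hP)
    (mul_le_of_le_one_left hP.le ((div_le_one hMpos).2 (hle x)))
  have hc : 0 ≤ M / 2 ^ l := by positivity
  rw [hcard, Finset.mul_sum]
  constructor
  · refine Finset.sum_le_sum fun x _ => ?_
    calc w x = M / 2 ^ l * (w x / M * 2 ^ l) := by field_simp
      _ ≤ _ := mul_le_mul_of_nonneg_left (hb x).1 hc
  · calc _ ≤ ∑ x : Fin n → Bool, (2 * w x + M / 2 ^ l) := by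
          refine Finset.sum_le_sum fun x _ => ?_
          refine (mul_le_mul_of_nonneg_left (hb x).2 hc).trans_eq ?_
          field_simp
      _ = _ := by
          rw [Finset.sum_add_distrib, ← Finset.mul_sum, zpow_sub₀ two_ne_zero]
          simp
          ring
end

section
/- Let n and l be natural numbers with l ≥ 1, and let w : {0,1}^n → ℝ be a function taking strictly positive values. Let M = max_{x ∈ {0,1}^n} w(x), and define the set S(w,l) ⊆ {0,1}^n × {0,1}^l to consist of all pairs (x, y) such that for every i with 1 ≤ i ≤ l, if w(x)/M ≤ 2^(i-1)/2^l then the i-th coordinate y_i of y equals 0. Then the lower bound holds: ∑_{x ∈ {0,1}^n} w(x) ≤ (M/2^l) · |S(w,l)|. -/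
/-!
Fix `x` and put `t = 2 ^ l * (w x / M)`, so `t ≤ 2 ^ l`. The fibre of `S(w,l)` over `x` consists of
the `y` vanishing at every `i` with `t ≤ 2 ^ i`. If `k ≤ l` is least with `t ≤ 2 ^ k`, the
coordinates below `k` are free, so the fibre has `2 ^ k ≥ t` elements
(`le_card_fibre`). Summing over `x` and multiplying by `M / 2 ^ l` gives the bound.
-/

/-- The induction on `l` finds the least `k` with `t ≤ 2 ^ k`: while `t ≤ 2 ^ l` the top coordinate
is forced to vanish and can be dropped; otherwise every coordinate is free. -/
theorem le_card_fibre (t : ℝ) (l : ℕ) (ht : t ≤ 2 ^ l) :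
    t ≤ (Nat.card {y : Fin l → Bool // ∀ i : Fin l, t ≤ 2 ^ (i : ℕ) → y i = false} : ℝ) := by
  induction l with
  | zero => simpa using ht
  | succ l ih =>
    by_cases h : t ≤ 2 ^ l
    · refine (ih h).trans ?_
      norm_cast
      refine Nat.card_le_card_of_injective
        (fun y => ⟨Fin.snoc (α := fun _ => Bool) y.1 false, ?_⟩) ?_
      · intro i
        refine Fin.lastCases ?_ (fun j => ?_) i
        · simp
        · simpa using y.2 j
      · intro y z hyz
        have := congrArg (fun u => Fin.init (α := fun _ => Bool) u.1) hyz
        simpa [Subtype.ext_iff] using this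
    · have hfree : ∀ y : Fin (l + 1) → Bool,
          ∀ i : Fin (l + 1), t ≤ 2 ^ (i : ℕ) → y i = false := by
        intro y i hi
        exact absurd (hi.trans (pow_le_pow_right₀ one_le_two (Nat.lt_succ_iff.mp i.2))) h
      rw [Nat.card_congr (Equiv.subtypeUnivEquiv hfree)]
      simpa using ht

/-- Discretization lemma, lower-bound direction:
`∑ x, w x ≤ (M/2^l) * |S(w,l)|`. -/
theorem discretization_lower_bound (n l : ℕ) (hl : 1 ≤ l)
    (w : (Fin n → Bool) → ℝ) (hw : ∀ x, 0 < w x)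
    (M : ℝ) (hM : IsGreatest (Set.range w) M) :
    (∑ x : Fin n → Bool, w x) ≤
      (M / 2 ^ l) *
        (Nat.card {p : (Fin n → Bool) × (Fin l → Bool) //
          ∀ i : Fin l, w p.1 / M ≤ 2 ^ (i : ℕ) / 2 ^ l → p.2 i = false} : ℝ) := by
  have hMpos : 0 < M := by
    obtain ⟨x, rfl⟩ := hM.1
    exact hw x
  have h2 : (0 : ℝ) < 2 ^ l := by positivity
  rw [Nat.card_congr (Equiv.subtypeProdEquivSigmaSubtype
    (fun (x : Fin n → Bool) (y : Fin l → Bool) =>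
      ∀ i : Fin l, w x / M ≤ 2 ^ (i : ℕ) / 2 ^ l → y i = false)), Nat.card_sigma]
  push_cast
  rw [Finset.mul_sum]
  refine Finset.sum_le_sum fun x _ => ?_
  have hx : w x / M * 2 ^ l ≤ 2 ^ l :=
    mul_le_of_le_one_left h2.le ((div_le_one hMpos).2 (hM.2 ⟨x, rfl⟩))
  have key := le_card_fibre _ l hx
  simp only [← le_div_iff₀ h2] at key
  calc w x = M / 2 ^ l * (w x / M * 2 ^ l) := by field_simp
    _ ≤ _ := by
      refine mul_le_mul_of_nonneg_left ?_ (by positivity)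
      rwa [le_div_iff₀ h2] at key
end

section
/- Let n and l be natural numbers with l ≥ 1, and let w : {0,1}^n → ℝ be a function taking strictly positive values. Let M = max_{x ∈ {0,1}^n} w(x), and define the set S(w,l) ⊆ {0,1}^n × {0,1}^l to consist of all pairs (x, y) such that for every i with 1 ≤ i ≤ l, if w(x)/M ≤ 2^(i-1)/2^l then the i-th coordinate y_i of y equals 0. Then the upper bound holds: (M/2^l) · |S(w,l)| ≤ 2·(∑_{x ∈ {0,1}^n} w(x)) + M·2^(n-l). -/
/-!
For fixed `x` put `c = 2^l * w x / M`. A string `y` with `(x, y) ∈ S(w,l)` is free exactly in the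
coordinates `i` (counted from `0`) with `2^i < c`. These form an initial segment; if it is nonempty
with last element `k`, there are `2^(k+1) < 2c` such `y`, and otherwise there is one. So each fibre
has at most `2c + 1` elements (`card_fibre_le`), and summing over the `2^n` strings `x` and
multiplying by `M / 2^l` gives the bound.
-/

/-- Induction on `l`: if the top coordinate is free, then `2^l < c` and the trivial bound `2^(l+1)`
suffices; if it is forced to be `false`, dropping it is injective. -/
lemma card_fibre_le (c : ℝ) (hc : 0 ≤ c) (l : ℕ) :
    (Nat.card {y : Fin l → Bool // ∀ i : Fin l, c ≤ 2 ^ (i : ℕ) → y i = false} : ℝ)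
      ≤ 2 * c + 1 := by
  induction l with
  | zero =>
    have h := Finite.card_subtype_le
      (fun y : Fin 0 → Bool => ∀ i : Fin 0, c ≤ 2 ^ (i : ℕ) → y i = false)
    rw [Nat.card_eq_fintype_card (α := Fin 0 → Bool), Fintype.card_fun] at h
    simp only [Fintype.card_fin, pow_zero] at h
    have h' : (Nat.card {y : Fin 0 → Bool // ∀ i : Fin 0, c ≤ 2 ^ (i : ℕ) → y i = false} : ℝ)
      ≤ 1 := by exact_mod_cast h
    linarith
  | succ l ih =>
    by_cases h : c ≤ 2 ^ l
    · refine le_trans ?_ ih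
      have hinj := Nat.card_le_card_of_injective
        (fun y : {y : Fin (l + 1) → Bool // ∀ i : Fin (l + 1), c ≤ 2 ^ (i : ℕ) → y i = false} =>
          (⟨fun i => y.1 i.castSucc, fun i hi => y.2 i.castSucc (by simpa using hi)⟩ :
            {y : Fin l → Bool // ∀ i : Fin l, c ≤ 2 ^ (i : ℕ) → y i = false})) (by
        rintro ⟨y, hy⟩ ⟨z, hz⟩ hyz
        simp only [Subtype.mk.injEq] at hyz ⊢
        funext i
        refine Fin.lastCases ?_ (fun i => congrFun hyz i) i
        rw [hy _ (by simpa using h), hz _ (by simpa using h)])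
      exact_mod_cast hinj
    · have h2 := Finite.card_subtype_le
        (fun y : Fin (l + 1) → Bool => ∀ i : Fin (l + 1), c ≤ 2 ^ (i : ℕ) → y i = false)
      rw [Nat.card_eq_fintype_card (α := Fin (l + 1) → Bool), Fintype.card_fun] at h2
      simp only [Fintype.card_fin, Fintype.card_bool] at h2
      have h' : (Nat.card {y : Fin (l + 1) → Bool //
          ∀ i : Fin (l + 1), c ≤ 2 ^ (i : ℕ) → y i = false} : ℝ) ≤ 2 ^ (l + 1) := by
        exact_mod_cast h2
      rw [pow_succ] at h'
      linarith

/-- Discretization lemma, upper-bound direction: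
`(M/2^l) * |S(w,l)| ≤ 2 * ∑ x, w x + M * 2^(n-l)`. -/
theorem discretization_upper_bound (n l : ℕ) (hl : 1 ≤ l)
    (w : (Fin n → Bool) → ℝ) (hw : ∀ x, 0 < w x)
    (M : ℝ) (hM : IsGreatest (Set.range w) M) :
    (M / 2 ^ l) *
        (Nat.card {p : (Fin n → Bool) × (Fin l → Bool) //
          ∀ i : Fin l, w p.1 / M ≤ 2 ^ (i : ℕ) / 2 ^ l → p.2 i = false} : ℝ) ≤
      2 * (∑ x : Fin n → Bool, w x) + M * (2 : ℝ) ^ ((n : ℤ) - (l : ℤ)) := by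
  have hM0 : 0 < M := by
    obtain ⟨x, rfl⟩ := hM.1
    exact hw x
  have hcard := Nat.card_congr (Equiv.subtypeProdEquivSigmaSubtype
    (fun (x : Fin n → Bool) (y : Fin l → Bool) =>
      ∀ i : Fin l, w x / M ≤ 2 ^ (i : ℕ) / 2 ^ l → y i = false))
  rw [Nat.card_sigma] at hcard
  rw [hcard, Nat.cast_sum]
  have hfib : ∀ x, (Nat.card {y : Fin l → Bool //
      ∀ i : Fin l, w x / M ≤ 2 ^ (i : ℕ) / 2 ^ l → y i = false} : ℝ)
      ≤ 2 * (w x / M * 2 ^ l) + 1 := by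
    intro x
    have h := card_fibre_le (w x / M * 2 ^ l) (by have := hw x; positivity) l
    simpa only [le_div_iff₀ (show (0 : ℝ) < 2 ^ l by positivity)] using h
  calc _ ≤ M / 2 ^ l * ∑ x : Fin n → Bool, (2 * (w x / M * 2 ^ l) + 1) := by
        gcongr with x
        exact hfib x
    _ = _ := by
        rw [Finset.sum_add_distrib, ← Finset.mul_sum, ← Finset.sum_mul, ← Finset.sum_div,
          zpow_sub₀ two_ne_zero]
        simp only [Finset.sum_const, Finset.card_univ, Fintype.card_fun, Fintype.card_fin,
          Fintype.card_bool, nsmul_eq_mul, Nat.cast_pow, Nat.cast_ofNat, zpow_natCast]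
        field_simp
end
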